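/- arXiv:1909.06155 — 7 statements merged into one kernel-verified Lean document; each statement's English description precedes it below -/
import Mathlib

section
/- For every real θ > 0 and every H ∈ (0,1), θ² ∫₀^∞ ∫₀^∞ e^{-θs} e^{-θt} · (1/2)(s^{2H} + t^{2H} − |t−s|^{2H}) ds dt = H Γ(2H) / θ^{2H}. (This is the variance of the limit random variable ζ_{B^H,∞} = θ ∫₀^∞ e^{-θs} B^H_s ds, computed from the covariance function (1/2)(s^{2H}+t^{2H}−|t−s|^{2H}) of fractional Brownian motion.) -/
open MeasureTheory Filter Set

theorem variance_zeta_fBm (θ H : ℝ) (hθ : 0 < θ) (hH : H ∈ Set.Ioo (0:ℝ) 1) :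
    θ ^ 2 * ∫ p in Set.Ioi (0:ℝ) ×ˢ Set.Ioi (0:ℝ),
        Real.exp (-θ * p.1) * Real.exp (-θ * p.2) *
          ((1 / 2) * (p.1 ^ (2 * H) + p.2 ^ (2 * H) - |p.2 - p.1| ^ (2 * H)))
      = H * Real.Gamma (2 * H) / θ ^ (2 * H) := by
  obtain ⟨hH0, hH1⟩ := hH
  set a : ℝ → ℝ := (Ioi (0:ℝ)).indicator (fun x => Real.exp (-(2 * θ) * x)) with ha
  set c : ℝ → ℝ := (Ioi (0:ℝ)).indicator (fun x => Real.exp (-θ * x)) with hc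
  set b : ℝ → ℝ := (Ioi (0:ℝ)).indicator (fun x => x ^ (2 * H) * Real.exp (-θ * x)) with hb
  have ia : Integrable a := by
    rw [ha, integrable_indicator_iff measurableSet_Ioi]
    exact integrableOn_exp_mul_Ioi (by linarith) 0
  have ic : Integrable c := by
    rw [hc, integrable_indicator_iff measurableSet_Ioi]
    exact integrableOn_exp_mul_Ioi (by linarith) 0
  have ib : Integrable b := by
    rw [hb, integrable_indicator_iff measurableSet_Ioi]
    have := integrableOn_rpow_mul_exp_neg_mul_rpow (s := 2 * H) (p := 1) (b := θ)
      (by linarith) one_pos hθ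
    simpa using this
  have va : ∫ x, a x = 1 / (2 * θ) := by
    rw [ha, integral_indicator measurableSet_Ioi, integral_exp_mul_Ioi (by linarith)]
    simp
  have vc : ∫ x, c x = 1 / θ := by
    rw [hc, integral_indicator measurableSet_Ioi, integral_exp_mul_Ioi (by linarith)]
    simp
  have vb : ∫ x, b x = (1 / θ) ^ (2 * H + 1) * Real.Gamma (2 * H + 1) := by
    rw [hb, integral_indicator measurableSet_Ioi]
    have := Real.integral_rpow_mul_exp_neg_mul_Ioi (a := 2 * H + 1) (r := θ) (by linarith) hθ
    rw [← this]
    simp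
  set h : ℝ × ℝ → ℝ := fun p => a p.1 * b p.2 with hh
  have ih : Integrable h (volume.prod volume) := ia.mul_prod ib
  have mp := measurePreserving_prod_neg_add (volume : Measure ℝ) (volume : Measure ℝ)
  set F : ℝ × ℝ → ℝ := fun p => a p.1 * b (-p.1 + p.2) with hF
  have iF : Integrable F (volume.prod volume) := mp.integrable_comp_of_integrable ih
  have vF : ∫ p, F p ∂(volume.prod volume) = (∫ x, a x) * ∫ x, b x := by
    rw [← integral_prod_mul a b]
    conv_rhs => rw [← mp.map_eq]
    rw [integral_map mp.measurable.aemeasurable]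
    rw [mp.map_eq]; exact ih.1
  have iFs : Integrable (fun p : ℝ × ℝ => F p.swap) (volume.prod volume) := iF.swap
  have vFs : ∫ p : ℝ × ℝ, F p.swap ∂(volume.prod volume) = (∫ x, a x) * ∫ x, b x := by
    rw [integral_prod_swap F, vF]
  have key : ∀ p : ℝ × ℝ, (Set.Ioi (0:ℝ) ×ˢ Set.Ioi (0:ℝ)).indicator (fun p : ℝ × ℝ =>
      Real.exp (-θ * p.1) * Real.exp (-θ * p.2) *
          ((1 / 2) * (p.1 ^ (2 * H) + p.2 ^ (2 * H) - |p.2 - p.1| ^ (2 * H)))) p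
      = (1 / 2) * ((b p.1 * c p.2 + c p.1 * b p.2) - (F p + F p.swap)) := by
    rintro ⟨s, t⟩
    have b0 : ∀ x ≤ 0, b x = 0 := fun x hx => indicator_of_notMem (by simpa using hx) _
    have c0 : ∀ x ≤ 0, c x = 0 := fun x hx => indicator_of_notMem (by simpa using hx) _
    have a0 : ∀ x ≤ 0, a x = 0 := fun x hx => indicator_of_notMem (by simpa using hx) _
    have b1 : ∀ x, 0 < x → b x = x ^ (2 * H) * Real.exp (-θ * x) :=
      fun x hx => indicator_of_mem (by simpa using hx) _
    have c1 : ∀ x, 0 < x → c x = Real.exp (-θ * x) :=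
      fun x hx => indicator_of_mem (by simpa using hx) _
    have a1 : ∀ x, 0 < x → a x = Real.exp (-(2 * θ) * x) :=
      fun x hx => indicator_of_mem (by simpa using hx) _
    have e : ∀ x y : ℝ, Real.exp (-(2 * θ) * x) * Real.exp (-θ * (-x + y))
        = Real.exp (-θ * x) * Real.exp (-θ * y) := by
      intro x y
      rw [← Real.exp_add, ← Real.exp_add]; congr 1; ring
    simp only [hF, Prod.swap, Prod.fst, Prod.snd]
    by_cases hs : 0 < s
    · by_cases ht : 0 < t
      · rw [indicator_of_mem (by simp [hs, ht])]
        simp only []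
        rw [b1 s hs, b1 t ht, c1 s hs, c1 t ht, a1 s hs, a1 t ht]
        rcases lt_trichotomy s t with h1 | h1 | h1
        · rw [b1 (-s + t) (by linarith), b0 (-t + s) (by linarith), abs_of_pos (by linarith)]
          rw [show t - s = -s + t by ring]
          linear_combination (1 / 2) * (-s + t) ^ (2 * H) * e s t
        · subst h1
          rw [b0 (-s + s) (by linarith), sub_self, abs_zero, Real.zero_rpow (by linarith)]
          ring
        · rw [b1 (-t + s) (by linarith), b0 (-s + t) (by linarith), abs_of_neg (by linarith)]
          rw [show -(t - s) = -t + s by ring]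
          linear_combination (1 / 2) * (-t + s) ^ (2 * H) * e t s
      · push Not at ht
        rw [indicator_of_notMem (by simp [ht]), b0 t ht, c0 t ht, a0 t ht,
          b0 (-s + t) (by linarith)]
        ring
    · push Not at hs
      rw [indicator_of_notMem (by simp [hs]), b0 s hs, c0 s hs, a0 s hs]
      by_cases ht : 0 < t
      · rw [b0 (-t + s) (by linarith)]; ring
      · rw [a0 t (by linarith)]; ring
  rw [← integral_indicator (measurableSet_Ioi.prod measurableSet_Ioi)]
  simp_rw [key]
  have i1 : Integrable (fun p : ℝ × ℝ => b p.1 * c p.2 + c p.1 * b p.2) (volume.prod volume) :=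
    (ib.mul_prod ic).add (ic.mul_prod ib)
  have i2 : Integrable (fun p : ℝ × ℝ => F p + F p.swap) (volume.prod volume) := iF.add iFs
  rw [Measure.volume_eq_prod, integral_const_mul, integral_sub i1 i2,
    integral_add (ib.mul_prod ic) (ic.mul_prod ib), integral_add iF iFs, vF, vFs,
    integral_prod_mul, integral_prod_mul, va, vb, vc, Real.Gamma_add_one (by linarith),
    Real.rpow_add_one (by positivity), Real.div_rpow zero_le_one hθ.le, Real.one_rpow]
  have : θ ^ (2 * H) ≠ 0 := by positivity
  field_simp
  ring
end

section
/- For every real θ > 0 and every H ∈ (0,1), θ² ∫₀^∞ ∫₀^∞ e^{-θs} e^{-θt} · ( t^{2H} + s^{2H} − (1/2)((t+s)^{2H} + |t−s|^{2H}) ) ds dt = (1−H) Γ(2H+1) / θ^{2H}. (This is the variance of the limit random variable ζ_{S^H,∞} = θ ∫₀^∞ e^{-θs} S^H_s ds, computed from the covariance function of subfractional Brownian motion.) -/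
open MeasureTheory Filter Set

lemma aux_gamma (θ a : ℝ) (hθ : 0 < θ) (ha : 0 < a) :
    IntegrableOn (fun x : ℝ => Real.exp (-θ * x) * x ^ a) (Ioi 0) ∧
    ∫ x in Ioi (0:ℝ), Real.exp (-θ * x) * x ^ a = Real.Gamma (a + 1) / (θ ^ a * θ) := by
  constructor
  · have h := integrableOn_rpow_mul_exp_neg_mul_rpow (p := 1) (s := a) (b := θ) (by linarith)
      one_pos hθ
    simp only [Real.rpow_one] at h
    simpa only [mul_comm] using h
  · have h := Real.integral_rpow_mul_exp_neg_mul_Ioi (a := a + 1) (r := θ) (by linarith) hθ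
    simp only [add_sub_cancel_right] at h
    simp only [neg_mul]
    simp_rw [mul_comm (Real.exp _)]
    rw [h, one_div, Real.inv_rpow hθ.le, Real.rpow_add_one hθ.ne']
    field_simp

lemma aux_exp (θ : ℝ) (hθ : 0 < θ) :
    IntegrableOn (fun x : ℝ => Real.exp (-θ * x)) (Ioi 0) ∧
    ∫ x in Ioi (0:ℝ), Real.exp (-θ * x) = 1 / θ := by
  refine ⟨integrableOn_exp_mul_Ioi (by linarith) 0, ?_⟩
  rw [integral_exp_mul_Ioi (by linarith)]
  simp

lemma aux_restrict : (volume : Measure (ℝ × ℝ)).restrict (Ioi 0 ×ˢ Ioi 0)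
    = (volume.restrict (Ioi (0:ℝ))).prod (volume.restrict (Ioi (0:ℝ))) := by
  rw [Measure.prod_restrict]; rfl

lemma aux_A (θ a : ℝ) (hθ : 0 < θ) (ha : 0 < a) :
    IntegrableOn (fun p : ℝ × ℝ => Real.exp (-θ * p.1) * Real.exp (-θ * p.2) * p.2 ^ a)
      (Ioi 0 ×ˢ Ioi 0) ∧
    ∫ p in Ioi (0:ℝ) ×ˢ Ioi (0:ℝ), Real.exp (-θ * p.1) * Real.exp (-θ * p.2) * p.2 ^ a
      = Real.Gamma (a + 1) / (θ ^ a * θ ^ 2) := by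
  unfold IntegrableOn
  rw [aux_restrict]
  simp_rw [mul_assoc (Real.exp _)]
  refine ⟨(aux_exp θ hθ).1.mul_prod (aux_gamma θ a hθ ha).1, ?_⟩
  rw [integral_prod_mul (fun x => Real.exp (-θ * x)) (fun x => Real.exp (-θ * x) * x ^ a),
    (aux_exp θ hθ).2, (aux_gamma θ a hθ ha).2]
  field_simp

lemma aux_B (θ a : ℝ) (hθ : 0 < θ) (ha : 0 < a) :
    IntegrableOn (fun p : ℝ × ℝ => Real.exp (-θ * p.1) * Real.exp (-θ * p.2) * p.1 ^ a)
      (Ioi 0 ×ˢ Ioi 0) ∧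
    ∫ p in Ioi (0:ℝ) ×ˢ Ioi (0:ℝ), Real.exp (-θ * p.1) * Real.exp (-θ * p.2) * p.1 ^ a
      = Real.Gamma (a + 1) / (θ ^ a * θ ^ 2) := by
  unfold IntegrableOn
  rw [aux_restrict]
  simp_rw [mul_right_comm (Real.exp _)]
  refine ⟨(aux_gamma θ a hθ ha).1.mul_prod (aux_exp θ hθ).1, ?_⟩
  rw [integral_prod_mul (fun x => Real.exp (-θ * x) * x ^ a) (fun x => Real.exp (-θ * x)),
    (aux_exp θ hθ).2, (aux_gamma θ a hθ ha).2]
  field_simp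

lemma aux_pow (s t w a : ℝ) (hs : 0 < s) (ht : 0 < t) (ha : 0 < a) (hw : 0 ≤ w)
    (hwst : w ≤ t + s) : w ^ a ≤ 2 ^ a * t ^ a + 2 ^ a * s ^ a := by
  rw [← Real.mul_rpow (by norm_num) ht.le, ← Real.mul_rpow (by norm_num) hs.le]
  have h1 : 0 ≤ (2 * t) ^ a := by positivity
  have h2 : 0 ≤ (2 * s) ^ a := by positivity
  rcases le_total s t with h | h
  · have := Real.rpow_le_rpow hw (by linarith : w ≤ 2 * t) ha.le
    linarith
  · have := Real.rpow_le_rpow hw (by linarith : w ≤ 2 * s) ha.le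
    linarith

lemma aux_int (θ a : ℝ) (hθ : 0 < θ) (ha : 0 < a) (w : ℝ × ℝ → ℝ) (hwm : Measurable w)
    (hw : ∀ s t : ℝ, 0 < s → 0 < t → 0 ≤ w (s, t) ∧ w (s, t) ≤ t + s) :
    IntegrableOn (fun p : ℝ × ℝ => Real.exp (-θ * p.1) * Real.exp (-θ * p.2) * w p ^ a)
      (Ioi 0 ×ˢ Ioi 0) := by
  refine Integrable.mono' (((aux_A θ a hθ ha).1.const_mul (2 ^ a)).add
    ((aux_B θ a hθ ha).1.const_mul (2 ^ a))) ?_ ?_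
  · exact Measurable.aestronglyMeasurable (by fun_prop)
  · refine (ae_restrict_iff' (measurableSet_Ioi.prod measurableSet_Ioi)).2 (ae_of_all _ ?_)
    rintro ⟨s, t⟩ ⟨hs, ht⟩
    simp only [mem_Ioi] at hs ht
    obtain ⟨h0, h1⟩ := hw s t hs ht
    have h2 := aux_pow s t _ a hs ht ha h0 h1
    have h3 : 0 ≤ w (s, t) ^ a := Real.rpow_nonneg h0 _
    rw [Real.norm_of_nonneg (by positivity)]
    simp only [Pi.add_apply]
    have := mul_le_mul_of_nonneg_left h2
      (by positivity : 0 ≤ Real.exp (-θ * s) * Real.exp (-θ * t))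
    linarith

lemma aux_C (θ a : ℝ) (hθ : 0 < θ) (ha : 0 < a) :
    ∫ p in Ioi (0:ℝ) ×ˢ Ioi (0:ℝ), Real.exp (-θ * p.1) * Real.exp (-θ * p.2) * (p.2 + p.1) ^ a
      = (a + 1) * Real.Gamma (a + 1) / (θ ^ a * θ ^ 2) := by
  have hQ : MeasurableSet (Ioi (0:ℝ) ×ˢ Ioi (0:ℝ)) := measurableSet_Ioi.prod measurableSet_Ioi
  have hi := aux_int θ a hθ ha (fun p => p.2 + p.1) (by fun_prop)
    (fun s t hs ht => ⟨by simp only; linarith, le_rfl⟩)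
  rw [← integrable_indicator_iff hQ] at hi
  rw [← integral_indicator hQ]
  have hmp : MeasurePreserving (MeasurableEquiv.shearAddRight ℝ).symm
      (volume : Measure (ℝ × ℝ)) volume := measurePreserving_prod_neg_add volume volume
  rw [← hmp.integral_comp']
  rw [← hmp.integrable_comp_emb (MeasurableEquiv.measurableEmbedding _)] at hi
  have key : ∀ y x : ℝ, (Ioi (0:ℝ) ×ˢ Ioi (0:ℝ)).indicator
      (fun p : ℝ × ℝ => Real.exp (-θ * p.1) * Real.exp (-θ * p.2) * (p.2 + p.1) ^ a)
      ((MeasurableEquiv.shearAddRight ℝ).symm (x, y))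
      = (Ioo 0 y).indicator (fun _ => Real.exp (-θ * y) * y ^ a) x := by
    intro y x
    have : (MeasurableEquiv.shearAddRight ℝ).symm (x, y) = (x, -x + y) := rfl
    rw [this]
    have hm : (x, -x + y) ∈ Ioi (0:ℝ) ×ˢ Ioi (0:ℝ) ↔ x ∈ Ioo 0 y := by
      simp only [mem_prod, mem_Ioi, mem_Ioo]
      constructor <;> rintro ⟨h1, h2⟩ <;> constructor <;> linarith
    by_cases h : x ∈ Ioo 0 y
    · rw [indicator_of_mem h, indicator_of_mem (hm.2 h)]
      simp only
      rw [← Real.exp_add]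
      ring_nf
    · rw [indicator_of_notMem h, indicator_of_notMem (fun h' => h (hm.1 h'))]
  rw [Measure.volume_eq_prod] at hi ⊢
  refine (integral_prod_symm _ hi).trans ?_
  simp_rw [Function.comp_apply, key]
  have inner : ∀ y : ℝ, ∫ x, (Ioo 0 y).indicator (fun _ => Real.exp (-θ * y) * y ^ a) x
      = (Ioi 0).indicator (fun y => Real.exp (-θ * y) * y ^ (a + 1)) y := by
    intro y
    rw [integral_indicator measurableSet_Ioo]
    by_cases hy : 0 < y
    · rw [indicator_of_mem (by exact hy), setIntegral_const, Real.rpow_add_one hy.ne']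
      simp [hy.le]
      ring
    · rw [indicator_of_notMem (by exact hy), Ioo_eq_empty hy]
      simp
  simp_rw [inner]
  rw [integral_indicator measurableSet_Ioi, (aux_gamma θ (a + 1) hθ (by linarith)).2,
    Real.Gamma_add_one (by linarith), Real.rpow_add_one hθ.ne']
  field_simp

lemma aux_D (θ a : ℝ) (hθ : 0 < θ) (ha : 0 < a) :
    ∫ p in Ioi (0:ℝ) ×ˢ Ioi (0:ℝ), Real.exp (-θ * p.1) * Real.exp (-θ * p.2) * |p.2 - p.1| ^ a
      = Real.Gamma (a + 1) / (θ ^ a * θ ^ 2) := by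
  have hQ : MeasurableSet (Ioi (0:ℝ) ×ˢ Ioi (0:ℝ)) := measurableSet_Ioi.prod measurableSet_Ioi
  have hi := aux_int θ a hθ ha (fun p => |p.2 - p.1|) (by fun_prop)
    (fun s t hs ht => ⟨abs_nonneg _, by
      simp only; exact abs_le.2 ⟨by linarith, by linarith⟩⟩)
  rw [← integrable_indicator_iff hQ] at hi
  rw [← integral_indicator hQ]
  have hmp : MeasurePreserving (MeasurableEquiv.shearAddRight ℝ)
      (volume : Measure (ℝ × ℝ)) volume := measurePreserving_prod_add volume volume
  rw [← hmp.integral_comp']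
  rw [← hmp.integrable_comp_emb (MeasurableEquiv.measurableEmbedding _)] at hi
  have key : ∀ y x : ℝ, (Ioi (0:ℝ) ×ˢ Ioi (0:ℝ)).indicator
      (fun p : ℝ × ℝ => Real.exp (-θ * p.1) * Real.exp (-θ * p.2) * |p.2 - p.1| ^ a)
      ((MeasurableEquiv.shearAddRight ℝ) (x, y))
      = (Ioi (max 0 (-y))).indicator
        (fun x => (Real.exp (-θ * y) * |y| ^ a) * Real.exp ((-(2 * θ)) * x)) x := by
    intro y x
    have : (MeasurableEquiv.shearAddRight ℝ) (x, y) = (x, x + y) := rfl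
    rw [this]
    have hm : (x, x + y) ∈ Ioi (0:ℝ) ×ˢ Ioi (0:ℝ) ↔ x ∈ Ioi (max 0 (-y)) := by
      simp only [mem_prod, mem_Ioi, max_lt_iff]
      constructor <;> rintro ⟨h1, h2⟩ <;> constructor <;> linarith
    by_cases h : x ∈ Ioi (max 0 (-y))
    · rw [indicator_of_mem h, indicator_of_mem (hm.2 h)]
      simp only
      rw [← Real.exp_add, mul_right_comm, ← Real.exp_add]
      ring_nf
    · rw [indicator_of_notMem h, indicator_of_notMem (fun h' => h (hm.1 h'))]
  rw [Measure.volume_eq_prod] at hi ⊢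
  refine (integral_prod_symm _ hi).trans ?_
  simp_rw [Function.comp_apply, key]
  have inner : ∀ y : ℝ, ∫ x, (Ioi (max 0 (-y))).indicator
        (fun x => (Real.exp (-θ * y) * |y| ^ a) * Real.exp ((-(2 * θ)) * x)) x
      = (fun y => (1 / (2 * θ)) * (Real.exp (-θ * y) * y ^ a)) |y| := by
    intro y
    rw [integral_indicator measurableSet_Ioi, integral_const_mul,
      integral_exp_mul_Ioi (by linarith)]
    have h : Real.exp (-θ * |y|) = Real.exp (-θ * y) * Real.exp (-(2 * θ) * max 0 (-y)) := by
      rw [← Real.exp_add]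
      congr 1
      rcases le_total 0 y with h | h
      · rw [abs_of_nonneg h, max_eq_left (by linarith)]; ring
      · rw [abs_of_nonpos h, max_eq_right (by linarith)]; ring
    simp only [h]
    field_simp
  simp_rw [inner]
  rw [integral_comp_abs (f := fun y => (1 / (2 * θ)) * (Real.exp (-θ * y) * y ^ a)),
    integral_const_mul, (aux_gamma θ a hθ ha).2]
  field_simp

theorem variance_zeta_subfBm (θ H : ℝ) (hθ : 0 < θ) (hH : H ∈ Set.Ioo (0:ℝ) 1) :
    θ ^ 2 * ∫ p in Set.Ioi (0:ℝ) ×ˢ Set.Ioi (0:ℝ),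
        Real.exp (-θ * p.1) * Real.exp (-θ * p.2) *
          (p.2 ^ (2 * H) + p.1 ^ (2 * H)
            - (1 / 2) * ((p.2 + p.1) ^ (2 * H) + |p.2 - p.1| ^ (2 * H)))
      = (1 - H) * Real.Gamma (2 * H + 1) / θ ^ (2 * H) := by
  have ha : 0 < 2 * H := by linarith [hH.1]
  obtain ⟨iA, eA⟩ := aux_A θ (2 * H) hθ ha
  obtain ⟨iB, eB⟩ := aux_B θ (2 * H) hθ ha
  have iC := aux_int θ (2 * H) hθ ha (fun p => p.2 + p.1) (by fun_prop)
    (fun s t hs ht => ⟨by simp only; linarith, le_rfl⟩)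
  have iD := aux_int θ (2 * H) hθ ha (fun p => |p.2 - p.1|) (by fun_prop)
    (fun s t hs ht => ⟨abs_nonneg _, by
      simp only; exact abs_le.2 ⟨by linarith, by linarith⟩⟩)
  have eC := aux_C θ (2 * H) hθ ha
  have eD := aux_D θ (2 * H) hθ ha
  have hsplit : ∀ p : ℝ × ℝ, Real.exp (-θ * p.1) * Real.exp (-θ * p.2) *
          (p.2 ^ (2 * H) + p.1 ^ (2 * H)
            - (1 / 2) * ((p.2 + p.1) ^ (2 * H) + |p.2 - p.1| ^ (2 * H)))
      = (Real.exp (-θ * p.1) * Real.exp (-θ * p.2) * p.2 ^ (2 * H)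
          + Real.exp (-θ * p.1) * Real.exp (-θ * p.2) * p.1 ^ (2 * H))
        - (1 / 2) * (Real.exp (-θ * p.1) * Real.exp (-θ * p.2) * (p.2 + p.1) ^ (2 * H)
          + Real.exp (-θ * p.1) * Real.exp (-θ * p.2) * |p.2 - p.1| ^ (2 * H)) := by
    intro p; ring
  simp_rw [hsplit]
  rw [integral_sub, integral_add iA iB, integral_const_mul, integral_add iC iD, eA, eB, eC, eD]
  · have : θ ^ (2 * H) ≠ 0 := (Real.rpow_pos_of_pos hθ _).ne'
    field_simp
    ring
  · exact iA.add iB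
  · exact (iC.add iD).const_mul _
end

section
/- Let (Ω, F, P) be a probability space and let G : [0,∞) × Ω → ℝ be a stochastic process such that G_0 = 0, each G_t is measurable, the sample paths t ↦ G_t(ω) are continuous for every ω, and there exist constants c > 0 and γ ∈ (0,1) such that for all s, t ≥ 0 the increment G_t − G_s has the centered real Gaussian distribution N(0, v(s,t)) with variance v(s,t) ≤ c |t−s|^{2γ}. Then for every δ with γ < δ ≤ 1, almost surely G_T / T^δ → 0 as T → ∞ (the limit taken over real T → ∞). -/
open MeasureTheory Filter Set ProbabilityTheory

lemma gauss_moment {Ω : Type*} [MeasurableSpace Ω] (P : Measure Ω)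
    (X : Ω → ℝ) (hX : Measurable X) (v : NNReal) (hv : P.map X = gaussianReal 0 v)
    (s : ℝ) (hs : (v : ℝ) ≤ s ^ 2) (hs0 : 0 ≤ s) (p : ℕ) :
    ∫⁻ ω, ENNReal.ofReal (|X ω| ^ p) ∂P ≤
      ENNReal.ofReal (s ^ p * ∫ x, |x| ^ p ∂(gaussianReal 0 1)) := by
  have h1 : ∫⁻ ω, ENNReal.ofReal (|X ω| ^ p) ∂P
      = ∫⁻ x, ENNReal.ofReal (|x| ^ p) ∂(gaussianReal 0 v) := by
    rw [← hv, lintegral_map (by fun_prop) hX]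
  have h2 : gaussianReal 0 v = (gaussianReal 0 1).map (fun x => Real.sqrt v * x) := by
    rw [gaussianReal_map_const_mul]
    congr 1
    · simp
    · ext
      simp
  have hint : Integrable (fun x : ℝ => |x| ^ p) (gaussianReal 0 1) := by
    have := (memLp_id_gaussianReal (μ := 0) (v := 1) (p : NNReal)).integrable_norm_pow'
    simpa using this
  have hsv : Real.sqrt v ≤ s := Real.sqrt_le_iff.2 ⟨hs0, hs⟩
  rw [h1, h2, lintegral_map (by fun_prop) (by fun_prop), ← integral_const_mul,
    ofReal_integral_eq_lintegral_ofReal (hint.const_mul _) (ae_of_all _ fun x => by positivity)]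
  refine lintegral_mono fun x => ENNReal.ofReal_le_ofReal ?_
  rw [abs_mul, mul_pow, abs_of_nonneg (Real.sqrt_nonneg _)]
  gcongr

lemma chain_bound (g : ℝ → ℝ) (hg0 : g 0 = 0) (hg : ContinuousOn g (Set.Ici 0))
    (L B r : ℝ) (hL : 0 < L) (hB : 0 ≤ B) (hr0 : 0 ≤ r) (hr1 : r < 1)
    (h : ∀ m k : ℕ, k < 2 ^ m → |g (L * (k + 1) / 2 ^ m) - g (L * k / 2 ^ m)| ≤ B * r ^ m)
    (T : ℝ) (hT0 : 0 ≤ T) (hT : T < L) : |g T| ≤ B / (1 - r) := by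
  set f : ℕ → ℕ := fun m => ⌊T / L * 2 ^ m⌋₊ with hf
  set t : ℕ → ℝ := fun m => L * f m / 2 ^ m with ht
  have hTL : 0 ≤ T / L := by positivity
  have hTL1 : T / L < 1 := (div_lt_one hL).2 hT
  have hfl : ∀ m, (f m : ℝ) ≤ T / L * 2 ^ m := fun m => Nat.floor_le (by positivity)
  have hfu : ∀ m, T / L * 2 ^ m < f m + 1 := fun m => Nat.lt_floor_add_one _
  have hb : ∀ m, |g (t m)| ≤ ∑ j ∈ Finset.range (m + 1), B * r ^ j := by
    intro m
    induction m with
    | zero =>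
      have : f 0 = 0 := by
        simp only [hf]; rw [Nat.floor_eq_zero]; simpa using hTL1
      simp [ht, this, hg0, hB]
    | succ m ih =>
      rw [Finset.sum_range_succ]
      have h1 : f (m + 1) = 2 * f m ∨ f (m + 1) = 2 * f m + 1 := by
        have a1 := hfl m
        have a2 := hfu m
        have a3 := hfl (m + 1)
        have a4 := hfu (m + 1)
        rw [pow_succ] at a3 a4
        have b1 : (2 * f m : ℝ) < f (m + 1) + 1 := by nlinarith
        have b2 : (f (m + 1) : ℝ) < 2 * f m + 2 := by nlinarith
        have b1' : 2 * f m < f (m + 1) + 1 := by exact_mod_cast b1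
        have b2' : f (m + 1) < 2 * f m + 2 := by exact_mod_cast b2
        omega
      have h2 : t m = L * ((2 * f m : ℕ) : ℝ) / 2 ^ (m + 1) := by
        simp only [ht]; push_cast; rw [pow_succ]; field_simp
      have h3 : |g (t (m + 1)) - g (t m)| ≤ B * r ^ (m + 1) := by
        rcases h1 with h1 | h1
        · have : t (m + 1) = t m := by rw [h2]; simp only [ht, h1]
          rw [this]; simp; positivity
        · have hlt : 2 * f m < 2 ^ (m + 1) := by
            have : (f m : ℝ) < 2 ^ m :=
              lt_of_le_of_lt (hfl m) (by have : (0:ℝ) < 2 ^ m := by positivity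
                                         nlinarith)
            have : f m < 2 ^ m := by exact_mod_cast this
            rw [pow_succ]; omega
          have := h (m + 1) (2 * f m) hlt
          rw [h2]
          simp only [ht, h1]
          push_cast at this ⊢
          exact this
      have h4 : |g (t (m + 1))| ≤ |g (t m)| + |g (t (m + 1)) - g (t m)| := by
        have := abs_add_le (g (t m)) (g (t (m + 1)) - g (t m))
        simpa using this
      linarith
  have hb' : ∀ m, |g (t m)| ≤ B / (1 - r) := by
    intro m
    refine (hb m).trans ?_
    rw [← Finset.mul_sum, div_eq_mul_inv, ← tsum_geometric_of_lt_one hr0 hr1]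
    gcongr
    exact (summable_geometric_of_lt_one hr0 hr1).sum_le_tsum _ (fun _ _ => by positivity)
  have htl : Tendsto t atTop (nhds T) := by
    have hlow : Tendsto (fun m : ℕ => T - L * (1 / 2 : ℝ) ^ m) atTop (nhds T) := by
      have := (tendsto_pow_atTop_nhds_zero_of_lt_one (r := (1 / 2 : ℝ)) (by norm_num)
        (by norm_num)).const_mul L
      simpa using this.const_sub T
    refine tendsto_of_tendsto_of_tendsto_of_le_of_le hlow tendsto_const_nhds ?_ ?_
    · intro m
      have := hfu m
      have h2 : (0:ℝ) < 2 ^ m := by positivity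
      simp only [ht]
      rw [le_div_iff₀ h2, sub_mul, one_div, inv_pow, mul_assoc, inv_mul_cancel₀ h2.ne']
      have : L * (T / L * 2 ^ m) < L * (f m + 1) := by gcongr
      have e : L * (T / L * 2 ^ m) = T * 2 ^ m := by field_simp
      linarith
    · intro m
      have h2 : (0:ℝ) < 2 ^ m := by positivity
      simp only [ht]
      rw [div_le_iff₀ h2]
      have : L * (f m) ≤ L * (T / L * 2 ^ m) := by gcongr; exact hfl m
      have e : L * (T / L * 2 ^ m) = T * 2 ^ m := by field_simp
      linarith
  have hgt : Tendsto (fun m => g (t m)) atTop (nhds (g T)) := by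
    refine (hg T hT0).tendsto.comp (tendsto_nhdsWithin_iff.2 ⟨htl, Eventually.of_forall fun m => ?_⟩)
    simp only [ht, Set.mem_Ici]; positivity
  exact le_of_tendsto hgt.abs (Eventually.of_forall hb')

theorem gaussian_process_growth
    {Ω : Type*} [MeasurableSpace Ω] (P : Measure Ω) [IsProbabilityMeasure P]
    (G : ℝ → Ω → ℝ) (v : ℝ → ℝ → NNReal) (c γ : ℝ)
    (hc : 0 < c) (hγ : γ ∈ Set.Ioo (0:ℝ) 1)
    (hG0 : ∀ ω, G 0 ω = 0)
    (hmeas : ∀ t, Measurable (G t))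
    (hcont : ∀ ω, ContinuousOn (fun t => G t ω) (Set.Ici 0))
    (hgauss : ∀ s t, 0 ≤ s → 0 ≤ t →
      P.map (fun ω => G t ω - G s ω) = gaussianReal 0 (v s t))
    (hvar : ∀ s t, 0 ≤ s → 0 ≤ t → (v s t : ℝ) ≤ c * |t - s| ^ (2 * γ))
    (δ : ℝ) (hδγ : γ < δ) (hδ1 : δ ≤ 1) :
    ∀ᵐ ω ∂P, Filter.Tendsto (fun T : ℝ => G T ω / T ^ δ) Filter.atTop (nhds 0) := by
  obtain ⟨β, hβ1, hβ2⟩ := exists_between hδγ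
  have hγ0 : 0 < γ := hγ.1
  set A : ℝ := 2 ^ β with hA
  set h : ℝ := 2 ^ (γ / 2) with hh
  have hA0 : 0 < A := by positivity
  have hh1 : 1 < h := Real.one_lt_rpow (by norm_num) (by linarith)
  have hh0 : 0 < h := by linarith
  have hhg : h ^ 2 = 2 ^ γ := by
    rw [hh, ← Real.rpow_natCast, ← Real.rpow_mul (by norm_num)]; congr 1; push_cast; ring
  have hgA : h ^ 2 < A := by
    rw [hhg]; exact Real.rpow_lt_rpow_of_exponent_lt (by norm_num) hβ1
  obtain ⟨p, hp⟩ := pow_unbounded_of_one_lt 2 hh1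
  have hp0 : p ≠ 0 := by rintro rfl; norm_num at hp
  set C : ℝ := ∫ x, |x| ^ p ∂(gaussianReal 0 1) with hC
  have hC0 : 0 ≤ C := integral_nonneg fun x => by positivity
  set I : ℕ → ℕ → ℕ → Ω → ℝ := fun n m k ω =>
    G (2 ^ n * (k + 1) / 2 ^ m) ω - G (2 ^ n * k / 2 ^ m) ω with hI
  have hImeas : ∀ n m k, Measurable (I n m k) := fun n m k => (hmeas _).sub (hmeas _)
  have hmom : ∀ n m k, ∫⁻ ω, ENNReal.ofReal (|I n m k ω| ^ p) ∂P ≤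
      ENNReal.ofReal ((Real.sqrt c * ((h ^ 2) ^ n / (h ^ 2) ^ m)) ^ p * C) := by
    intro n m k
    have hs : (0:ℝ) ≤ 2 ^ n * k / 2 ^ m := by positivity
    have ht : (0:ℝ) ≤ 2 ^ n * (k + 1) / 2 ^ m := by positivity
    refine gauss_moment P (I n m k) (hImeas n m k) _ (hgauss _ _ hs ht) _ ?_ (by positivity) p
    refine (hvar _ _ hs ht).trans (le_of_eq ?_)
    have e : (2:ℝ) ^ n * (k + 1) / 2 ^ m - 2 ^ n * k / 2 ^ m = 2 ^ n / 2 ^ m := by ring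
    rw [e, abs_of_nonneg (by positivity), mul_pow, Real.sq_sqrt hc.le, mul_comm 2 γ,
      Real.rpow_mul (by positivity), Real.div_rpow (by positivity) (by positivity), hhg,
      ← Real.rpow_natCast 2 n, ← Real.rpow_natCast 2 m, ← Real.rpow_mul (by norm_num),
      ← Real.rpow_mul (by norm_num), mul_comm (n:ℝ), mul_comm (m:ℝ),
      Real.rpow_mul (by norm_num), Real.rpow_mul (by norm_num)]
    simp only [Real.rpow_natCast]
    norm_cast
  set W : ℕ × ℕ → Ω → ENNReal := fun q ω =>
    ∑ k ∈ Finset.range (2 ^ q.2),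
      ENNReal.ofReal ((A ^ q.1 * h⁻¹ ^ q.2)⁻¹ ^ p) * ENNReal.ofReal (|I q.1 q.2 k ω| ^ p) with hW
  have hterm : ∀ n m k, Measurable fun ω => ENNReal.ofReal (|I n m k ω| ^ p) := by
    intro n m k
    have := hImeas n m k
    fun_prop
  have hWm : ∀ q, Measurable (W q) := fun q =>
    Finset.measurable_sum _ fun k _ => (hterm _ _ _).const_mul _
  have hWint : ∀ q : ℕ × ℕ, ∫⁻ ω, W q ω ∂P ≤
      ENNReal.ofReal (Real.sqrt c ^ p * C * (((h ^ 2 / A) ^ p) ^ q.1 * (2 * (h ^ p)⁻¹) ^ q.2)) := by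
    rintro ⟨n, m⟩
    simp only [hW]
    rw [lintegral_finsetSum _ fun k _ => (hterm _ _ _).const_mul _]
    calc _ ≤ ∑ k ∈ Finset.range (2 ^ m), ENNReal.ofReal ((A ^ n * h⁻¹ ^ m)⁻¹ ^ p) *
          ENNReal.ofReal ((Real.sqrt c * ((h ^ 2) ^ n / (h ^ 2) ^ m)) ^ p * C) := by
          refine Finset.sum_le_sum fun k _ => ?_
          rw [lintegral_const_mul _ (hterm _ _ _)]
          gcongr
          exact hmom n m k
      _ = _ := by
          rw [Finset.sum_const, Finset.card_range, nsmul_eq_mul,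
            ← ENNReal.ofReal_mul (by positivity), ← ENNReal.ofReal_natCast,
            ← ENNReal.ofReal_mul (by positivity)]
          congr 1
          push_cast
          simp only [mul_pow, div_pow, inv_pow, mul_inv, inv_inv, ← pow_mul]
          rw [show 2 * n * p = 2 * (p * n) by ring, show 2 * m * p = m * p + m * p by ring, pow_add,
            mul_comm p m, mul_comm p n]
          field_simp
          ring_nf
  have hfin : ∫⁻ ω, ∑' q, W q ω ∂P ≠ ⊤ := by
    rw [lintegral_tsum fun q => (hWm q).aemeasurable]
    refine ne_top_of_le_ne_top ?_ (ENNReal.tsum_le_tsum hWint)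
    refine Summable.tsum_ofReal_ne_top ?_
    refine Summable.mul_left _ ?_
    refine Summable.mul_of_nonneg (f := fun n : ℕ => ((h ^ 2 / A) ^ p) ^ n)
      (g := fun m : ℕ => (2 * (h ^ p)⁻¹) ^ m) ?_ ?_ (fun _ => by positivity) (fun _ => by positivity)
    · exact summable_geometric_of_lt_one (by positivity)
        (pow_lt_one₀ (by positivity) ((div_lt_one hA0).2 hgA) hp0)
    · refine summable_geometric_of_lt_one (by positivity) ?_
      rw [← div_eq_mul_inv, div_lt_one (by positivity)]; exact hp
  have hae := ae_lt_top' (Measurable.ennreal_tsum hWm).aemeasurable hfin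
  filter_upwards [hae] with ω hω
  set K : ℝ := (∑' q, W q ω).toReal with hK
  have hK0 : 0 ≤ K := ENNReal.toReal_nonneg
  have hbound : ∀ n m k : ℕ, k < 2 ^ m → |I n m k ω| ≤ (K + 1) * A ^ n * h⁻¹ ^ m := by
    intro n m k hk
    have h1 : ENNReal.ofReal ((A ^ n * h⁻¹ ^ m)⁻¹ ^ p) * ENNReal.ofReal (|I n m k ω| ^ p)
        ≤ ∑' q, W q ω := by
      refine le_trans ?_ (ENNReal.le_tsum (n, m))
      exact Finset.single_le_sum (f := fun k => ENNReal.ofReal ((A ^ n * h⁻¹ ^ m)⁻¹ ^ p) *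
        ENNReal.ofReal (|I n m k ω| ^ p)) (fun _ _ => zero_le) (Finset.mem_range.2 hk)
    rw [← ENNReal.ofReal_mul (by positivity), ENNReal.ofReal_le_iff_le_toReal hω.ne,
      ← mul_pow] at h1
    have h2 : (A ^ n * h⁻¹ ^ m)⁻¹ * |I n m k ω| ≤ K + 1 := by
      by_contra! hcon
      have := le_self_pow₀ (a := (A ^ n * h⁻¹ ^ m)⁻¹ * |I n m k ω|) (by linarith) hp0
      linarith
    rw [inv_mul_le_iff₀ (by positivity)] at h2
    linarith
  have hr1 : h⁻¹ < 1 := inv_lt_one_of_one_lt₀ hh1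
  set D : ℝ := (K + 1) * A / (1 - h⁻¹) with hD
  have hgrow : ∀ T : ℝ, 1 ≤ T → |G T ω| ≤ D * T ^ β := by
    intro T hT
    obtain ⟨n, hn1, hn2⟩ := exists_nat_pow_near hT (one_lt_two (α := ℝ))
    have := chain_bound (fun t => G t ω) (hG0 ω) (hcont ω) (2 ^ (n + 1)) ((K + 1) * A ^ (n + 1)) h⁻¹
      (by positivity) (by positivity) (by positivity) hr1 (fun m k hk => hbound (n + 1) m k hk)
      T (by linarith) hn2
    refine this.trans ?_
    have hAn : A ^ n ≤ T ^ β := by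
      have : A ^ n = ((2:ℝ) ^ n) ^ β := by
        rw [hA, ← Real.rpow_natCast, ← Real.rpow_natCast, ← Real.rpow_mul (by norm_num),
          ← Real.rpow_mul (by norm_num), mul_comm]
      rw [this]
      exact Real.rpow_le_rpow (by positivity) hn1 (by linarith)
    have h1r : 0 < 1 - h⁻¹ := by linarith
    calc (K + 1) * A ^ (n + 1) / (1 - h⁻¹) = D * A ^ n := by rw [hD, pow_succ]; ring
      _ ≤ D * T ^ β := by gcongr
  have hlim : Tendsto (fun T : ℝ => D * T ^ (-(δ - β))) atTop (nhds 0) := by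
    simpa using (tendsto_rpow_neg_atTop (y := δ - β) (by linarith)).const_mul D
  refine squeeze_zero_norm' ?_ hlim
  filter_upwards [eventually_ge_atTop 1] with T hT
  have hT0 : 0 < T := by linarith
  rw [Real.norm_eq_abs, abs_div, abs_of_pos (Real.rpow_pos_of_pos hT0 δ), neg_sub,
    Real.rpow_sub hT0, ← mul_div_assoc]
  gcongr
  exact hgrow T hT
end

section
/- Let θ > 0 and μ ∈ ℝ, let ζ : [0,∞) → ℝ be a continuous function with ζ_0 = 0 that converges to a limit ζ_∞ as t → ∞, and define X_t = μ(e^{θt} − 1) + e^{θt} ζ_t for t ≥ 0. Then e^{-2θT} ∫₀^T X_s² ds → (μ + ζ_∞)²/(2θ) as T → ∞. -/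
open MeasureTheory Filter Set

theorem vasicek_quad_cv (θ μ : ℝ) (hθ : 0 < θ)
    (ζ : ℝ → ℝ) (ζinf : ℝ)
    (hζcont : ContinuousOn ζ (Set.Ici 0)) (hζ0 : ζ 0 = 0)
    (hζlim : Filter.Tendsto ζ Filter.atTop (nhds ζinf))
    (X : ℝ → ℝ)
    (hX : ∀ t, 0 ≤ t → X t = μ * (Real.exp (θ * t) - 1) + Real.exp (θ * t) * ζ t) :
    Filter.Tendsto (fun T : ℝ => Real.exp (-2 * θ * T) * ∫ s in (0:ℝ)..T, (X s) ^ 2)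
      Filter.atTop (nhds ((μ + ζinf) ^ 2 / (2 * θ))) := by
  obtain ⟨h, hh⟩ : ∃ h : ℝ → ℝ, h = fun s =>
    (μ * (1 - Real.exp (-θ * max s 0)) + ζ (max s 0)) ^ 2 := ⟨_, rfl⟩
  have hcont : Continuous h := by
    have : Continuous (fun s : ℝ => ζ (max s 0)) :=
      hζcont.comp_continuous (by fun_prop) (fun s => le_max_right s 0)
    have h2 : Continuous (fun s : ℝ => μ * (1 - Real.exp (-θ * max s 0))) := by fun_prop
    rw [hh]
    exact (h2.add this).pow 2
  have hneg : ∀ s ≤ 0, h s = 0 := by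
    intro s hs
    simp [hh, max_eq_right hs, hζ0]
  have hlim : Tendsto h atTop (nhds ((μ + ζinf) ^ 2)) := by
    have h1 : Tendsto (fun s : ℝ => max s 0) atTop atTop :=
      tendsto_atTop_mono (fun s => le_max_left s 0) tendsto_id
    have h2 : Tendsto (fun s : ℝ => Real.exp (-θ * max s 0)) atTop (nhds 0) :=
      Real.tendsto_exp_atBot.comp (h1.const_mul_atTop_of_neg (by linarith))
    have h3 := ((((h2.const_sub 1).const_mul μ).add (hζlim.comp h1)).pow 2)
    rw [hh]
    simpa using h3
  obtain ⟨C, hC⟩ : ∃ C, ∀ s, ‖h s‖ ≤ C := by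
    have h1 := hlim.norm.eventually_le_const (lt_add_one _)
    obtain ⟨N, hN⟩ := eventually_atTop.1 h1
    obtain ⟨C, hC⟩ := (isCompact_Icc (a := (0:ℝ)) (b := N)).exists_bound_of_continuousOn
      hcont.continuousOn
    refine ⟨max (max C 0) (‖(μ + ζinf) ^ 2‖ + 1), fun s => ?_⟩
    rcases le_total s 0 with hs | hs
    · rw [hneg s hs]; simp
    rcases le_total s N with hs' | hs'
    · exact (hC s ⟨hs, hs'⟩).trans ((le_max_left _ _).trans (le_max_left _ _))
    · exact (hN s hs').trans (le_max_right _ _)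
  have hint : IntegrableOn (fun u : ℝ => Real.exp (-(2 * θ) * u)) (Ioi 0) :=
    exp_neg_integrableOn_Ioi 0 (by linarith)
  have key : Tendsto (fun T : ℝ => ∫ u in Ioi (0:ℝ), Real.exp (-(2 * θ) * u) * h (T - u)) atTop
      (nhds (∫ u in Ioi (0:ℝ), Real.exp (-(2 * θ) * u) * (μ + ζinf) ^ 2)) := by
    refine tendsto_integral_filter_of_dominated_convergence
      (fun u => Real.exp (-(2 * θ) * u) * C) ?_ ?_ (hint.mul_const C) ?_
    · refine Eventually.of_forall fun T => Continuous.aestronglyMeasurable ?_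
      fun_prop
    · refine Eventually.of_forall fun T => Eventually.of_forall fun u => ?_
      rw [norm_mul, Real.norm_of_nonneg (Real.exp_pos _).le]
      exact mul_le_mul_of_nonneg_left (hC _) (Real.exp_pos _).le
    · refine Eventually.of_forall fun u => Tendsto.const_mul _ (hlim.comp ?_)
      exact tendsto_atTop_add_const_right _ (-u) tendsto_id
  have hval : (∫ u in Ioi (0:ℝ), Real.exp (-(2 * θ) * u) * (μ + ζinf) ^ 2)
      = (μ + ζinf) ^ 2 / (2 * θ) := by
    rw [integral_mul_const, integral_exp_mul_Ioi (by linarith)]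
    simp
    field_simp
  rw [hval] at key
  refine key.congr' ?_
  filter_upwards [eventually_ge_atTop 0] with T hT
  have e1 : (∫ u in Ioi (0:ℝ), Real.exp (-(2 * θ) * u) * h (T - u))
      = ∫ u in (0:ℝ)..T, Real.exp (-(2 * θ) * u) * h (T - u) := by
    rw [intervalIntegral.integral_of_le hT]
    refine setIntegral_eq_of_subset_of_forall_sdiff_eq_zero measurableSet_Ioi
      (fun x hx => hx.1) ?_
    intro x hx
    have : T < x := by
      by_contra hc
      exact hx.2 ⟨hx.1, not_lt.1 hc⟩
    rw [hneg _ (by linarith), mul_zero]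
  have e2 := intervalIntegral.integral_comp_sub_left (a := 0) (b := T)
    (fun s => Real.exp (-(2 * θ) * (T - s)) * h s) T
  simp only [sub_sub_cancel, sub_self, sub_zero] at e2
  rw [e1, e2, ← intervalIntegral.integral_const_mul]
  refine intervalIntegral.integral_congr fun s hs => ?_
  rw [uIcc_of_le hT] at hs
  have hs0 := hs.1
  have a1 : Real.exp (-(2 * θ) * (T - s)) = Real.exp (-2 * θ * T) * Real.exp (θ * s) ^ 2 := by
    rw [← Real.exp_nat_mul, ← Real.exp_add]; congr 1; push_cast; ring
  have a2 : Real.exp (θ * s) * Real.exp (-θ * s) = 1 := by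
    rw [← Real.exp_add]; simp
  have a3 : X s = Real.exp (θ * s) * (μ * (1 - Real.exp (-θ * s)) + ζ s) := by
    rw [hX s hs0]; linear_combination μ * a2
  simp only [hh, max_eq_left hs0, a1, a3]
  ring
end

section
/- Let θ > 0 and μ ∈ ℝ, let ζ : [0,∞) → ℝ be a continuous function with ζ_0 = 0 that converges to a limit ζ_∞ as t → ∞ with μ + ζ_∞ ≠ 0, and define X_t = μ(e^{θt} − 1) + e^{θt} ζ_t for t ≥ 0. Define the least-squares-type estimator θ̃_T = ( (1/2) T X_T² − X_T ∫₀^T X_s ds ) / ( T ∫₀^T X_s² ds − (∫₀^T X_s ds)² ). Then θ̃_T → θ as T → ∞ (in particular the denominator is nonzero for all T large enough). -/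
open MeasureTheory Filter Set

theorem aux_zero (a : ℝ) (ha : 0 < a) (h : ℝ → ℝ) (hc : ContinuousOn h (Set.Ici 0))
    (hl : Tendsto (fun t => h t * Real.exp (-(a * t))) atTop (nhds 0)) :
    Tendsto (fun T => (∫ s in (0:ℝ)..T, h s) * Real.exp (-(a * T))) atTop (nhds 0) := by
  have hint : ∀ x y : ℝ, 0 ≤ x → 0 ≤ y → IntervalIntegrable h volume x y := by
    intro x y hx hy
    apply ContinuousOn.intervalIntegrable
    apply hc.mono
    intro z hz
    exact le_trans (le_min hx hy) hz.1
  have hexp : Tendsto (fun T : ℝ => Real.exp (-(a * T))) atTop (nhds 0) := by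
    apply Real.tendsto_exp_neg_atTop_nhds_zero.comp
    exact tendsto_id.const_mul_atTop ha
  rw [Metric.tendsto_atTop]
  intro ε hε
  have hεa : 0 < ε * a / 2 := by positivity
  obtain ⟨N0, hN0⟩ := (Metric.tendsto_atTop.1 hl) (ε * a / 2) hεa
  set N := max N0 0 with hN
  have hN0' : 0 ≤ N := le_max_right _ _
  have hbd : ∀ t, N ≤ t → |h t| ≤ ε * a / 2 * Real.exp (a * t) := by
    intro t ht
    have h1 := hN0 t (le_trans (le_max_left _ _) ht)
    rw [Real.dist_eq, sub_zero, abs_mul, Real.abs_exp, Real.exp_neg] at h1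
    have := Real.exp_pos (a * t)
    rw [← div_eq_mul_inv, div_lt_iff₀ this] at h1
    exact h1.le
  have hCl : Tendsto (fun T : ℝ => |∫ s in (0:ℝ)..N, h s| * Real.exp (-(a * T))) atTop (nhds 0) := by
    simpa using hexp.const_mul (|∫ s in (0:ℝ)..N, h s|)
  obtain ⟨M, hM⟩ := (Metric.tendsto_atTop.1 hCl) (ε / 2) (by positivity)
  refine ⟨max M N, fun T hT => ?_⟩
  have hTM := le_trans (le_max_left _ _) hT
  have hTN : N ≤ T := le_trans (le_max_right _ _) hT
  have h1 := hM T hTM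
  rw [Real.dist_eq, sub_zero, abs_mul, Real.abs_exp, abs_abs] at h1
  rw [Real.dist_eq, sub_zero, abs_mul, Real.abs_exp]
  have h2 : |∫ s in N..T, h s| ≤ ∫ s in N..T, ε * a / 2 * Real.exp (a * s) := by
    rw [← Real.norm_eq_abs]
    apply intervalIntegral.norm_integral_le_of_norm_le hTN
    · filter_upwards with t ht
      exact hbd t ht.1.le
    · apply Continuous.intervalIntegrable
      fun_prop
  have h3 : ∫ s in N..T, ε * a / 2 * Real.exp (a * s)
      = ε / 2 * (Real.exp (a * T) - Real.exp (a * N)) := by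
    rw [intervalIntegral.integral_const_mul, intervalIntegral.integral_comp_mul_left _ ha.ne',
      integral_exp, smul_eq_mul]
    field_simp
  rw [h3] at h2
  have h4 := intervalIntegral.integral_add_adjacent_intervals (hint 0 N le_rfl hN0')
    (hint N T hN0' (hN0'.trans hTN))
  rw [← h4]
  have h5 := abs_add_le (∫ s in (0:ℝ)..N, h s) (∫ s in N..T, h s)
  have e1 := Real.exp_pos (-(a * T))
  have e2 := Real.exp_pos (a * N)
  have e3 : Real.exp (a * T) * Real.exp (-(a * T)) = 1 := by
    rw [← Real.exp_add]; simp
  have h6 : |∫ s in N..T, h s| ≤ ε / 2 * Real.exp (a * T) := by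
    nlinarith
  calc _ ≤ (|∫ s in (0:ℝ)..N, h s| + ε / 2 * Real.exp (a * T)) * Real.exp (-(a * T)) := by
        gcongr; linarith
    _ = |∫ s in (0:ℝ)..N, h s| * Real.exp (-(a * T)) + ε / 2 := by
        rw [add_mul, mul_assoc (ε / 2), e3, mul_one]
    _ < ε := by linarith

theorem aux_lim (a L : ℝ) (ha : 0 < a) (f : ℝ → ℝ) (hc : ContinuousOn f (Set.Ici 0))
    (hl : Tendsto (fun t => f t * Real.exp (-(a * t))) atTop (nhds L)) :
    Tendsto (fun T => (∫ s in (0:ℝ)..T, f s) * Real.exp (-(a * T))) atTop (nhds (L / a)) := by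
  have hexp : Tendsto (fun T : ℝ => Real.exp (-(a * T))) atTop (nhds 0) := by
    apply Real.tendsto_exp_neg_atTop_nhds_zero.comp
    exact tendsto_id.const_mul_atTop ha
  have e3 : ∀ T, Real.exp (a * T) * Real.exp (-(a * T)) = 1 := by
    intro T
    rw [← Real.exp_add]; simp
  have hz := aux_zero a ha (fun t => f t - L * Real.exp (a * t))
    (hc.sub (by fun_prop)) (by
      have := hl.sub_const L
      rw [sub_self] at this
      refine this.congr fun t => ?_
      rw [sub_mul, mul_assoc, e3, mul_one])
  have hs := hz.add ((hexp.const_sub 1).const_mul (L / a))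
  simp only [sub_zero, mul_one, zero_add] at hs
  refine hs.congr' ?_
  filter_upwards [eventually_ge_atTop 0] with T hT
  rw [intervalIntegral.integral_sub, intervalIntegral.integral_const_mul,
    intervalIntegral.integral_comp_mul_left _ ha.ne', integral_exp, smul_eq_mul]
  · simp only [mul_zero, Real.exp_zero]
    linear_combination (-(L / a)) * e3 T
  · apply ContinuousOn.intervalIntegrable
    apply hc.mono
    intro z hz
    exact le_trans (le_min le_rfl hT) hz.1
  · apply Continuous.intervalIntegrable
    fun_prop

theorem vasicek_theta_consistency (θ μ : ℝ) (hθ : 0 < θ)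
    (ζ : ℝ → ℝ) (ζinf : ℝ)
    (hζcont : ContinuousOn ζ (Set.Ici 0)) (hζ0 : ζ 0 = 0)
    (hζlim : Filter.Tendsto ζ Filter.atTop (nhds ζinf))
    (hne : μ + ζinf ≠ 0)
    (X : ℝ → ℝ)
    (hX : ∀ t, 0 ≤ t → X t = μ * (Real.exp (θ * t) - 1) + Real.exp (θ * t) * ζ t) :
    (∀ᶠ T : ℝ in Filter.atTop,
        T * (∫ s in (0:ℝ)..T, (X s) ^ 2) - (∫ s in (0:ℝ)..T, X s) ^ 2 ≠ 0) ∧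
    Filter.Tendsto
      (fun T : ℝ =>
        ((1 / 2) * T * (X T) ^ 2 - X T * ∫ s in (0:ℝ)..T, X s) /
          (T * (∫ s in (0:ℝ)..T, (X s) ^ 2) - (∫ s in (0:ℝ)..T, X s) ^ 2))
      Filter.atTop (nhds θ) := by
  have hXc : ContinuousOn X (Set.Ici 0) := by
    have : ContinuousOn (fun t => μ * (Real.exp (θ * t) - 1) + Real.exp (θ * t) * ζ t)
        (Set.Ici 0) := by fun_prop
    exact this.congr fun t ht => hX t ht
  have hexp : Tendsto (fun T : ℝ => Real.exp (-(θ * T))) atTop (nhds 0) := by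
    apply Real.tendsto_exp_neg_atTop_nhds_zero.comp
    exact tendsto_id.const_mul_atTop hθ
  have e3 : ∀ T, Real.exp (θ * T) * Real.exp (-(θ * T)) = 1 := by
    intro T
    rw [← Real.exp_add]; simp
  have e2 : ∀ T, Real.exp (-(2 * θ * T)) = Real.exp (-(θ * T)) ^ 2 := by
    intro T
    rw [← Real.exp_nat_mul]; congr 1; push_cast; ring
  set m := μ + ζinf with hm
  have hA : Tendsto (fun t => X t * Real.exp (-(θ * t))) atTop (nhds m) := by
    have := ((hexp.const_sub 1).const_mul μ).add hζlim
    rw [sub_zero, mul_one] at this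
    refine this.congr' ?_
    filter_upwards [eventually_ge_atTop 0] with t ht
    rw [hX t ht]
    linear_combination (-μ - ζ t) * e3 t
  have hB := aux_lim θ m hθ X hXc hA
  have hC := aux_lim (2 * θ) (m ^ 2) (by positivity) (fun t => X t ^ 2) (hXc.pow 2) (by
    refine (hA.pow 2).congr fun t => ?_
    rw [e2, mul_pow])
  have hinv : Tendsto (fun T : ℝ => T⁻¹) atTop (nhds 0) := tendsto_inv_atTop_zero
  have hD := hC.sub (hinv.mul (hB.pow 2))
  have hN := ((hA.pow 2).const_mul (1 / 2)).sub (hinv.mul (hA.mul hB))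
  simp only [zero_mul, sub_zero] at hD hN
  have hD0 : m ^ 2 / (2 * θ) ≠ 0 := by positivity
  have key : ∀ T : ℝ, T ≠ 0 →
      (∫ s in (0:ℝ)..T, (X s) ^ 2) * Real.exp (-(2 * θ * T))
        - T⁻¹ * ((∫ s in (0:ℝ)..T, X s) * Real.exp (-(θ * T))) ^ 2
      = (T * (∫ s in (0:ℝ)..T, (X s) ^ 2) - (∫ s in (0:ℝ)..T, X s) ^ 2)
        * (T⁻¹ * Real.exp (-(θ * T)) ^ 2) := by
    intro T hT
    rw [e2]
    field_simp
  constructor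
  · filter_upwards [hD.eventually_ne hD0, eventually_gt_atTop 0] with T h1 h2 h3
    apply h1
    rw [key T h2.ne', h3, zero_mul]
  · have hq := hN.div hD hD0
    have hv : 1 / 2 * m ^ 2 / (m ^ 2 / (2 * θ)) = θ := by field_simp
    rw [hv] at hq
    refine hq.congr' ?_
    filter_upwards [eventually_gt_atTop 0] with T hT
    simp only [Pi.div_apply]
    rw [key T hT.ne']
    have hk : T⁻¹ * Real.exp (-(θ * T)) ^ 2 ≠ 0 := by positivity
    rw [← mul_div_mul_right ((1 / 2) * T * (X T) ^ 2 - X T * ∫ s in (0:ℝ)..T, X s) _ hk]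
    congr 1
    field_simp
end

section
/- Let θ > 0 and μ ∈ ℝ, let ζ : [0,∞) → ℝ be a continuous function with ζ_0 = 0 that converges to a limit ζ_∞ as t → ∞ with μ + ζ_∞ ≠ 0, and define X_t = μ(e^{θt} − 1) + e^{θt} ζ_t for t ≥ 0. Define G_t = X_t − μθt − θ ∫₀^t X_s ds, and assume there exists δ ∈ (0,1) with G_T / T^δ → 0 as T → ∞. Define the least-squares-type estimator μ̃_T = ( ∫₀^T X_s² ds − (1/2) X_T ∫₀^T X_s ds ) / ( (1/2) T X_T − ∫₀^T X_s ds ). Then μ̃_T → μ as T → ∞ (in particular the denominator is nonzero for all T large enough). -/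
open MeasureTheory Filter Set

lemma aux_int_s12 (θ : ℝ) (hθ : 0 < θ) (h : ℝ → ℝ) (hc : Continuous h)
    (hl : Tendsto (fun s => h s / (s * Real.exp (θ * s))) atTop (nhds 0)) :
    Tendsto (fun T => (∫ s in (0:ℝ)..T, h s) / (T * Real.exp (θ * T))) atTop (nhds 0) := by
  rw [Metric.tendsto_atTop]
  intro e he
  have hε : 0 < e * θ / 2 := by positivity
  set ε := e * θ / 2 with hεd
  have h1 := (Metric.tendsto_atTop.1 hl) ε hε
  obtain ⟨A, hA⟩ := h1
  obtain ⟨C, hC⟩ := (isCompact_Icc (a := (0:ℝ)) (b := A)).exists_bound_of_continuousOn hc.continuousOn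
  have hCb : ∀ s, 0 < s → |h s| ≤ ε * (s * Real.exp (θ * s)) + |C| := by
    intro s hs
    have hp : 0 < s * Real.exp (θ * s) := by positivity
    rcases le_total s A with hsA | hsA
    · have := hC s ⟨hs.le, hsA⟩
      rw [Real.norm_eq_abs] at this
      have h3 := le_abs_self C
      have : 0 < ε * (s * Real.exp (θ * s)) := by positivity
      linarith
    · have := hA s hsA
      rw [Real.dist_eq, sub_zero, abs_div, abs_of_pos hp, div_lt_iff₀ hp] at this
      have := abs_nonneg C
      linarith
  have hint : ∀ T, 0 < T → |∫ s in (0:ℝ)..T, h s| ≤ ε * T * (Real.exp (θ * T) / θ) + |C| * T := by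
    intro T hT
    have hd : ∀ x ∈ uIcc 0 T, HasDerivAt (fun s => ε * T * (Real.exp (θ * s) / θ) + |C| * s)
        (ε * T * Real.exp (θ * x) + |C|) x := by
      intro x _
      have h1 : HasDerivAt (fun s => Real.exp (θ * s)) (Real.exp (θ * x) * (θ * 1)) x :=
        ((hasDerivAt_id x).const_mul θ).exp
      have h2 := ((h1.div_const θ).const_mul (ε * T)).add ((hasDerivAt_id x).const_mul |C|)
      refine h2.congr_deriv ?_
      field_simp
    have hgi : IntervalIntegrable (fun x => ε * T * Real.exp (θ * x) + |C|) volume 0 T := by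
      apply Continuous.intervalIntegrable; fun_prop
    have e1 := intervalIntegral.integral_eq_sub_of_hasDerivAt hd hgi
    have e2 : ‖∫ s in (0:ℝ)..T, h s‖ ≤ ∫ x in (0:ℝ)..T, (ε * T * Real.exp (θ * x) + |C|) := by
      apply intervalIntegral.norm_integral_le_of_norm_le hT.le _ hgi
      refine Eventually.of_forall fun s hs => ?_
      rw [Real.norm_eq_abs]
      refine (hCb s hs.1).trans ?_
      have : s * Real.exp (θ * s) ≤ T * Real.exp (θ * s) :=
        mul_le_mul_of_nonneg_right hs.2 (Real.exp_pos _).le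
      nlinarith
    rw [e1, Real.norm_eq_abs] at e2
    have : 0 ≤ ε * T * (Real.exp (θ * 0) / θ) := by positivity
    linarith
  have hexp : Tendsto (fun T => |C| * Real.exp (-(θ * T))) atTop (nhds 0) := by
    have : Tendsto (fun T : ℝ => θ * T) atTop atTop := tendsto_id.const_mul_atTop hθ
    simpa using (Real.tendsto_exp_neg_atTop_nhds_zero.comp this).const_mul |C|
  have hev := (hexp.eventually_lt_const (half_pos he)).and (eventually_gt_atTop 0)
  obtain ⟨B, hB⟩ := eventually_atTop.1 hev
  refine ⟨B, fun T hT => ?_⟩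
  obtain ⟨hb, hT0⟩ := hB T hT
  have hp : 0 < T * Real.exp (θ * T) := by positivity
  rw [Real.dist_eq, sub_zero, abs_div, abs_of_pos hp, div_lt_iff₀ hp]
  refine (hint T hT0).trans_lt ?_
  have e3 : ε * T * (Real.exp (θ * T) / θ) = e / 2 * (T * Real.exp (θ * T)) := by
    rw [hεd]; field_simp
  have e4 : |C| * T = |C| * Real.exp (-(θ * T)) * (T * Real.exp (θ * T)) := by
    rw [Real.exp_neg]; field_simp
  rw [e3, e4]
  nlinarith

lemma aux_id (θ μ : ℝ) (X G : ℝ → ℝ) (hX : Continuous X) (hGc : Continuous G)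
    (hG : ∀ t, G t = X t - μ * θ * t - θ * ∫ s in (0:ℝ)..t, X s) (T : ℝ) :
    (∫ s in (0:ℝ)..T, (X s) ^ 2) - (1 / 2) * X T * (∫ s in (0:ℝ)..T, X s) =
      μ * (θ * T * (∫ s in (0:ℝ)..T, X s) / 2 - ∫ s in (0:ℝ)..T, X s)
      + μ * (μ * θ * T ^ 2 / 2 + ∫ s in (0:ℝ)..T, G s) + (∫ s in (0:ℝ)..T, X s * G s)
      - G T * (∫ s in (0:ℝ)..T, X s) / 2 := by
  set S : ℝ → ℝ := fun t => ∫ s in (0:ℝ)..t, X s with hS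
  have hSd : ∀ x, HasDerivAt S (X x) x := fun x =>
    intervalIntegral.integral_hasDerivAt_right (hX.intervalIntegrable _ _)
      (hX.stronglyMeasurableAtFilter _ _) hX.continuousAt
  have hSc : Continuous S := continuous_iff_continuousAt.2 fun x => (hSd x).continuousAt
  have hG' : ∀ t, G t = X t - μ * θ * t - θ * S t := hG
  have hW : ∀ x, HasDerivAt (fun t => ∫ s in (0:ℝ)..t, S s) (S x) x := fun x =>
    intervalIntegral.integral_hasDerivAt_right (hSc.intervalIntegrable _ _)
      (hSc.stronglyMeasurableAtFilter _ _) hSc.continuousAt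
  have i1 : ∫ s in (0:ℝ)..T, (X s ^ 2 - X s * G s) =
      μ * θ * (T * S T - ∫ s in (0:ℝ)..T, S s) + θ * (S T ^ 2 / 2) := by
    have := intervalIntegral.integral_eq_sub_of_hasDerivAt (a := 0) (b := T)
      (f := fun t => μ * θ * (t * S t - ∫ s in (0:ℝ)..t, S s) + θ * (S t ^ 2 / 2))
      (f' := fun s => X s ^ 2 - X s * G s) ?_ ?_
    · rw [this]; simp [hS]
    · intro x _
      have := ((((hasDerivAt_id x).mul (hSd x)).sub (hW x)).const_mul (μ * θ)).add
        ((((hSd x).pow 2).div_const 2).const_mul θ)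
      refine this.congr_deriv ?_
      rw [hG' x]; simp; ring
    · apply Continuous.intervalIntegrable; fun_prop
  have i2 : ∫ s in (0:ℝ)..T, (θ * S s + G s) = S T - μ * θ * (T ^ 2 / 2) := by
    have := intervalIntegral.integral_eq_sub_of_hasDerivAt (a := 0) (b := T)
      (f := fun t => S t - μ * θ * (t ^ 2 / 2))
      (f' := fun s => θ * S s + G s) ?_ ?_
    · rw [this]; simp [hS]
    · intro x _
      have := (hSd x).sub ((((hasDerivAt_id x).pow 2).div_const 2).const_mul (μ * θ))
      refine this.congr_deriv ?_
      rw [hG' x]; simp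
    · apply Continuous.intervalIntegrable; fun_prop
  rw [intervalIntegral.integral_sub (by apply Continuous.intervalIntegrable; fun_prop)
    (by apply Continuous.intervalIntegrable; fun_prop)] at i1
  rw [intervalIntegral.integral_add (by apply Continuous.intervalIntegrable; fun_prop)
    (by apply Continuous.intervalIntegrable; fun_prop), intervalIntegral.integral_const_mul] at i2
  change _ - 1 / 2 * X T * S T = μ * (θ * T * S T / 2 - S T) + _ + _ - G T * S T / 2
  have hGT := hG' T
  have hXT : X T = G T + μ * θ * T + θ * S T := by linarith
  rw [hXT]
  linear_combination i1 - μ * i2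

lemma aux_main (θ μ c : ℝ) (hθ : 0 < θ) (hc : c ≠ 0) (X G : ℝ → ℝ) (hX : Continuous X)
    (hG : ∀ t, G t = X t - μ * θ * t - θ * ∫ s in (0:ℝ)..t, X s)
    (hXl : Tendsto (fun t => X t / Real.exp (θ * t)) atTop (nhds c))
    (hGl : Tendsto (fun t => G t / t) atTop (nhds 0)) :
    (∀ᶠ T : ℝ in Filter.atTop,
        (1 / 2) * T * X T - (∫ s in (0:ℝ)..T, X s) ≠ 0) ∧
    Filter.Tendsto
      (fun T : ℝ =>
        ((∫ s in (0:ℝ)..T, (X s) ^ 2) - (1 / 2) * X T * ∫ s in (0:ℝ)..T, X s) /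
          ((1 / 2) * T * X T - ∫ s in (0:ℝ)..T, X s))
      Filter.atTop (nhds μ) := by
  have hSc : Continuous (fun t => ∫ s in (0:ℝ)..t, X s) :=
    intervalIntegral.continuous_primitive (fun a b => hX.intervalIntegrable a b) 0
  have hGc : Continuous G := by
    rw [funext hG]
    exact (hX.sub (by fun_prop)).sub (hSc.const_mul θ |> fun h => h)
  have hlin : Tendsto (fun T : ℝ => T / Real.exp (θ * T)) atTop (nhds 0) := by
    have := (Real.tendsto_pow_mul_exp_neg_atTop_nhds_zero 1).comp (tendsto_id.const_mul_atTop hθ)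
    have := this.div_const θ
    rw [zero_div] at this
    refine this.congr fun T => ?_
    simp [Real.exp_neg]; field_simp
  have hinv : Tendsto (fun T : ℝ => T⁻¹) atTop (nhds 0) := tendsto_inv_atTop_zero
  have hGe : Tendsto (fun T : ℝ => G T / Real.exp (θ * T)) atTop (nhds 0) := by
    have := hGl.mul hlin
    rw [zero_mul] at this
    refine this.congr' ?_
    filter_upwards [eventually_gt_atTop 0] with T hT
    field_simp
  have hSl : Tendsto (fun T => (∫ s in (0:ℝ)..T, X s) / Real.exp (θ * T)) atTop (nhds (c / θ)) := by
    have := ((hXl.sub (hlin.const_mul (μ * θ))).sub hGe).div_const θ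
    simp only [mul_zero, sub_zero] at this
    refine this.congr fun T => ?_
    rw [hG T]; field_simp; ring
  have hI1 := aux_int_s12 θ hθ G hGc (by
    have := hGe.mul hinv
    rw [zero_mul] at this
    refine this.congr fun T => ?_
    rw [div_mul_eq_div_div_swap, div_eq_mul_inv, div_eq_mul_inv])
  have hI2 := aux_int_s12 θ hθ (fun s => X s * G s) (hX.mul hGc) (by
    have := hXl.mul hGl
    rw [mul_zero] at this
    refine this.congr fun T => ?_
    rw [div_mul_div_comm, mul_comm T])
  have hden : Tendsto (fun T => ((1 / 2) * T * X T - ∫ s in (0:ℝ)..T, X s) / (T * Real.exp (θ * T)))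
      atTop (nhds (c / 2)) := by
    have := (hXl.div_const 2).sub (hSl.mul hinv)
    rw [mul_zero, sub_zero] at this
    refine this.congr' ?_
    filter_upwards [eventually_gt_atTop 0] with T hT
    field_simp
  have hnum : Tendsto (fun T => ((∫ s in (0:ℝ)..T, (X s) ^ 2) - (1 / 2) * X T * ∫ s in (0:ℝ)..T, X s)
      / (T * Real.exp (θ * T))) atTop (nhds (μ * (c / 2))) := by
    have := ((((hSl.const_mul (θ / 2)).sub (hSl.mul hinv)).const_mul μ).add
      (((hlin.const_mul (μ * θ / 2)).add hI1).const_mul μ)).add hI2 |>.sub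
      ((hGl.mul hSl).div_const 2)
    have e : μ * (θ / 2 * (c / θ) - c / θ * 0) + μ * (μ * θ / 2 * 0 + 0) + 0 - 0 * (c / θ) / 2
      = μ * (c / 2) := by field_simp; ring
    rw [e] at this
    refine this.congr' ?_
    filter_upwards [eventually_gt_atTop 0] with T hT
    rw [aux_id θ μ X G hX hGc hG T]
    field_simp
  have hc2 : c / 2 ≠ 0 := by positivity
  constructor
  · filter_upwards [hden.eventually_ne hc2] with T hT h0
    rw [h0, zero_div] at hT
    exact hT rfl
  · have := hnum.div hden hc2
    rw [mul_div_cancel_right₀ _ hc2] at this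
    refine this.congr' ?_
    filter_upwards [eventually_gt_atTop 0] with T hT
    have hp : T * Real.exp (θ * T) ≠ 0 := by positivity
    exact div_div_div_cancel_right₀ hp _ _

theorem vasicek_mu_consistency (θ μ : ℝ) (hθ : 0 < θ)
    (ζ : ℝ → ℝ) (ζinf : ℝ)
    (hζcont : ContinuousOn ζ (Set.Ici 0)) (hζ0 : ζ 0 = 0)
    (hζlim : Filter.Tendsto ζ Filter.atTop (nhds ζinf))
    (hne : μ + ζinf ≠ 0)
    (X : ℝ → ℝ)
    (hX : ∀ t, 0 ≤ t → X t = μ * (Real.exp (θ * t) - 1) + Real.exp (θ * t) * ζ t)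
    (G : ℝ → ℝ)
    (hG : ∀ t, G t = X t - μ * θ * t - θ * ∫ s in (0:ℝ)..t, X s)
    (hGrowth : ∃ δ ∈ Set.Ioo (0:ℝ) 1,
      Filter.Tendsto (fun T : ℝ => G T / T ^ δ) Filter.atTop (nhds 0)) :
    (∀ᶠ T : ℝ in Filter.atTop,
        (1 / 2) * T * X T - (∫ s in (0:ℝ)..T, X s) ≠ 0) ∧
    Filter.Tendsto
      (fun T : ℝ =>
        ((∫ s in (0:ℝ)..T, (X s) ^ 2) - (1 / 2) * X T * ∫ s in (0:ℝ)..T, X s) /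
          ((1 / 2) * T * X T - ∫ s in (0:ℝ)..T, X s))
      Filter.atTop (nhds μ) := by
  obtain ⟨δ, ⟨hδ0, hδ1⟩, hδ⟩ := hGrowth
  set Y : ℝ → ℝ := fun t => X (max t 0) with hY
  have hYX : ∀ t, 0 ≤ t → Y t = X t := fun t ht => by simp [hY, max_eq_left ht]
  have hYc : Continuous Y := by
    have h1 : Continuous fun t : ℝ => ζ (max t 0) :=
      hζcont.comp_continuous (by fun_prop) (fun t => le_max_right t 0)
    have : Y = fun t => μ * (Real.exp (θ * max t 0) - 1) + Real.exp (θ * max t 0) * ζ (max t 0) :=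
      funext fun t => hX _ (le_max_right t 0)
    rw [this]
    have h2 : Continuous fun t : ℝ => Real.exp (θ * max t 0) := by fun_prop
    exact ((h2.sub continuous_const).const_mul μ |> fun h => h).add (h2.mul h1)
  have hI : ∀ T, 0 ≤ T → ∫ s in (0:ℝ)..T, Y s = ∫ s in (0:ℝ)..T, X s := fun T hT => by
    apply intervalIntegral.integral_congr
    intro s hs
    rw [uIcc_of_le hT] at hs
    exact hYX s hs.1
  have hI2 : ∀ T, 0 ≤ T → ∫ s in (0:ℝ)..T, Y s ^ 2 = ∫ s in (0:ℝ)..T, X s ^ 2 := fun T hT => by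
    apply intervalIntegral.integral_congr
    intro s hs
    rw [uIcc_of_le hT] at hs
    simp only [hYX s hs.1]
  have key := aux_main θ μ (μ + ζinf) hθ hne Y
    (fun t => Y t - μ * θ * t - θ * ∫ s in (0:ℝ)..t, Y s) hYc (fun _ => rfl) ?_ ?_
  · refine ⟨?_, ?_⟩
    · filter_upwards [key.1, eventually_ge_atTop 0] with T h hT
      rwa [hI T hT, hYX T hT] at h
    · refine key.2.congr' ?_
      filter_upwards [eventually_ge_atTop 0] with T hT
      rw [hI T hT, hYX T hT, hI2 T hT]
  · have he : Tendsto (fun T : ℝ => Real.exp (-(θ * T))) atTop (nhds 0) :=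
      Real.tendsto_exp_neg_atTop_nhds_zero.comp (tendsto_id.const_mul_atTop hθ)
    have := ((he.const_sub 1).const_mul μ).add hζlim
    rw [sub_zero, mul_one] at this
    refine this.congr' ?_
    filter_upwards [eventually_ge_atTop 0] with T hT
    rw [hYX T hT, hX T hT, Real.exp_neg]
    field_simp
  · have h1 : Tendsto (fun T : ℝ => T ^ (-(1 - δ))) atTop (nhds 0) :=
      tendsto_rpow_neg_atTop (by linarith)
    have := hδ.mul h1
    rw [zero_mul] at this
    refine this.congr' ?_
    filter_upwards [eventually_gt_atTop 0] with T hT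
    simp only [hYX T hT.le, hI T hT.le]
    rw [← hG T, neg_sub, Real.rpow_sub hT, Real.rpow_one]
    have : T ^ δ ≠ 0 := (Real.rpow_pos_of_pos hT δ).ne'
    field_simp
end

section
/- Let θ > 0 and μ ∈ ℝ, let ζ : [0,∞) → ℝ be a continuous function with ζ_0 = 0 that converges to a limit ζ_∞ as t → ∞ with μ + ζ_∞ ≠ 0, and define X_t = μ(e^{θt} − 1) + e^{θt} ζ_t for t ≥ 0. Define G_t = X_t − μθt − θ ∫₀^t X_s ds, and assume there exists δ ∈ (0,1) with G_T / T^δ → 0 as T → ∞. Define the least-squares-type estimator α̃_T = ( X_T ∫₀^T X_s² ds − (1/2) X_T² ∫₀^T X_s ds ) / ( T ∫₀^T X_s² ds − (∫₀^T X_s ds)² ). Then α̃_T → α := μθ as T → ∞. -/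
open MeasureTheory Filter Set

lemma aux_lhop0 (f φ Φ : ℝ → ℝ) (hf : Continuous f) (hφ : Continuous φ)
    (hd : ∀ t, HasDerivAt Φ (φ t) t) (hpos : ∀ t, 0 ≤ t → 0 < φ t)
    (hΦ : Tendsto Φ atTop atTop) (h : Tendsto (fun t => f t / φ t) atTop (nhds 0)) :
    Tendsto (fun T => (∫ s in (0:ℝ)..T, f s) / Φ T) atTop (nhds 0) := by
  rw [Metric.tendsto_atTop] at h
  rw [Metric.tendsto_nhds]
  intro ε hε
  obtain ⟨A0, hA0⟩ := h (ε / 2) (by positivity)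
  obtain ⟨A, hA, hAA, hA1⟩ := ((eventually_ge_atTop A0).and
    ((eventually_ge_atTop 0).and (hΦ.eventually_ge_atTop 1))).exists
  filter_upwards [eventually_ge_atTop A, hΦ.eventually_ge_atTop 1,
    hΦ.eventually_ge_atTop (|∫ s in (0:ℝ)..A, f s| * 4 / ε)] with T hT h1 h2
  rw [Real.dist_eq, sub_zero, abs_div, abs_of_pos (by linarith : 0 < Φ T),
    div_lt_iff₀ (by linarith)]
  rw [div_le_iff₀ hε] at h2
  have e1 : (∫ s in (0:ℝ)..T, f s) = (∫ s in (0:ℝ)..A, f s) + ∫ s in A..T, f s :=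
    (intervalIntegral.integral_add_adjacent_intervals (hf.intervalIntegrable _ _)
      (hf.intervalIntegrable _ _)).symm
  have e2 : ‖∫ s in A..T, f s‖ ≤ ∫ s in A..T, (ε / 2) * φ s := by
    apply intervalIntegral.norm_integral_le_of_norm_le hT
    · filter_upwards with t ht
      have hp := hpos t (by linarith [ht.1])
      have := hA0 t (by linarith [ht.1])
      rw [Real.dist_eq, sub_zero, abs_div, abs_of_pos hp, div_lt_iff₀ hp] at this
      exact this.le
    · exact (continuous_const.mul hφ).intervalIntegrable _ _
  have e3 : (∫ s in A..T, (ε / 2) * φ s) = (ε / 2) * (Φ T - Φ A) := by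
    rw [intervalIntegral.integral_const_mul,
      intervalIntegral.integral_eq_sub_of_hasDerivAt (fun t _ => hd t)
        (hφ.intervalIntegrable _ _)]
  rw [e3, Real.norm_eq_abs] at e2
  rw [e1]
  have := abs_add_le (∫ s in (0:ℝ)..A, f s) (∫ s in A..T, f s)
  nlinarith

lemma aux_lhop (f φ Φ : ℝ → ℝ) (L : ℝ) (hf : Continuous f) (hφ : Continuous φ)
    (hd : ∀ t, HasDerivAt Φ (φ t) t) (hpos : ∀ t, 0 ≤ t → 0 < φ t)
    (hΦ : Tendsto Φ atTop atTop) (h : Tendsto (fun t => f t / φ t) atTop (nhds L)) :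
    Tendsto (fun T => (∫ s in (0:ℝ)..T, f s) / Φ T) atTop (nhds L) := by
  have h0 := aux_lhop0 (fun t => f t - L * φ t) φ Φ (by fun_prop) hφ hd hpos hΦ (by
    have := h.sub_const L
    rw [sub_self] at this
    refine this.congr' ?_
    filter_upwards [eventually_ge_atTop 0] with t ht
    have := hpos t ht
    field_simp)
  have h1 : Tendsto (fun T => L - L * Φ 0 / Φ T) atTop (nhds L) := by
    have : Tendsto (fun T => L * Φ 0 / Φ T) atTop (nhds 0) := tendsto_const_nhds.div_atTop hΦ
    simpa using this.const_sub L
  have := h0.add h1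
  rw [zero_add] at this
  refine this.congr' ?_
  filter_upwards [hΦ.eventually_ge_atTop 1] with T hT
  have : Φ T ≠ 0 := by linarith
  rw [intervalIntegral.integral_sub (hf.intervalIntegrable _ _)
    (Continuous.intervalIntegrable (by fun_prop) _ _), intervalIntegral.integral_const_mul,
      intervalIntegral.integral_eq_sub_of_hasDerivAt (fun t _ => hd t)
        (hφ.intervalIntegrable _ _)]
  field_simp
  ring

lemma aux_exp_s13 (f : ℝ → ℝ) (k L : ℝ) (hk : 0 < k) (hf : Continuous f)
    (h : Tendsto (fun t => f t / Real.exp (k * t)) atTop (nhds L)) :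
    Tendsto (fun T => (∫ s in (0:ℝ)..T, f s) / Real.exp (k * T)) atTop (nhds (L / k)) := by
  refine aux_lhop f (fun t => k * Real.exp (k * t)) _ _ hf (by fun_prop) ?_ ?_ ?_ ?_
  · intro t
    have := ((hasDerivAt_id t).const_mul k).exp
    simpa [mul_comm] using this
  · intro t _; positivity
  · exact Real.tendsto_exp_atTop.comp (tendsto_id.const_mul_atTop hk)
  · refine (h.div_const k).congr fun t => ?_
    field_simp

lemma aux_core (θ α c : ℝ) (hθ : 0 < θ) (hc : c ≠ 0) (X I Q H : ℝ → ℝ) (hX : Continuous X)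
    (hI : ∀ T, I T = ∫ s in (0:ℝ)..T, X s) (hQ : ∀ T, Q T = ∫ s in (0:ℝ)..T, X s ^ 2)
    (hH : ∀ T, H T = X T - θ * I T)
    (hlim : Tendsto (fun t => X t / Real.exp (θ * t)) atTop (nhds c))
    (hHlim : Tendsto (fun t => H t / t) atTop (nhds α)) :
    Tendsto (fun T => (X T * Q T - (1 / 2) * X T ^ 2 * I T) / (T * Q T - I T ^ 2))
      atTop (nhds α) := by
  have hId : ∀ t, HasDerivAt I (X t) t := by
    intro t
    rw [show I = fun T => ∫ s in (0:ℝ)..T, X s from funext hI]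
    exact hX.integral_hasStrictDerivAt 0 t |>.hasDerivAt
  have hIc : Continuous I := continuous_iff_continuousAt.2 fun t => (hId t).continuousAt
  have hHc : Continuous H := by
    rw [show H = _ from funext hH]; fun_prop
  have hI0 : I 0 = 0 := by simp [hI]
  have li : Tendsto (fun T => I T / Real.exp (θ * T)) atTop (nhds (c / θ)) := by
    simpa only [hI] using aux_exp_s13 X θ c hθ hX hlim
  have lq : Tendsto (fun T => Q T / Real.exp (θ * T) ^ 2) atTop (nhds (c ^ 2 / (2 * θ))) := by
    have := aux_exp_s13 (fun t => X t ^ 2) (2 * θ) (c ^ 2) (by positivity) (by fun_prop) (by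
      refine (hlim.pow 2).congr fun t => ?_
      rw [div_pow, ← Real.exp_nat_mul]; push_cast; ring_nf)
    refine this.congr fun t => ?_
    rw [hQ, ← Real.exp_nat_mul]; push_cast; ring_nf
  have lj : Tendsto (fun T => (∫ s in (0:ℝ)..T, I s) / Real.exp (θ * T)) atTop
      (nhds (c / θ / θ)) := aux_exp_s13 I θ _ hθ hIc li
  have lT : Tendsto (fun T : ℝ => 1 / T) atTop (nhds 0) := tendsto_const_nhds.div_atTop tendsto_id
  have lG : Tendsto (fun t => (H t - α * t) / t) atTop (nhds 0) := by
    have := hHlim.sub_const α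
    rw [sub_self] at this
    refine this.congr' ?_
    filter_upwards [eventually_gt_atTop 0] with t ht
    field_simp
  have lE : Tendsto (fun T => T / Real.exp (θ * T)) atTop (nhds 0) := by
    have := (Real.tendsto_pow_mul_exp_neg_atTop_nhds_zero 1).comp (tendsto_id.const_mul_atTop hθ)
    have := this.div_const θ
    rw [zero_div] at this
    refine this.congr fun t => ?_
    simp only [Function.comp, id, Real.exp_neg]
    field_simp
  have lXG : Tendsto (fun T => (∫ s in (0:ℝ)..T, X s * (H s - α * s)) / (T * Real.exp (θ * T)))
      atTop (nhds 0) := by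
    refine aux_lhop0 _ (fun t => (1 + θ * t) * Real.exp (θ * t)) (fun t => t * Real.exp (θ * t))
      (by fun_prop) (by fun_prop) ?_ ?_ ?_ ?_
    · intro t
      have := (hasDerivAt_id t).mul ((hasDerivAt_id t).const_mul θ).exp
      refine this.congr_deriv ?_
      simp only [id]; ring
    · intro t ht; positivity
    · exact tendsto_id.atTop_mul_atTop₀
        (Real.tendsto_exp_atTop.comp (tendsto_id.const_mul_atTop hθ))
    · have h1 : Tendsto (fun t : ℝ => 1 / t + θ) atTop (nhds (0 + θ)) := lT.add_const θ
      have := (hlim.mul lG).div h1 (by simpa using hθ.ne')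
      rw [mul_zero, zero_div] at this
      refine this.congr' ?_
      filter_upwards [eventually_gt_atTop 0] with t ht
      simp only [Pi.div_apply]
      field_simp
  have hXI : ∀ T, (∫ s in (0:ℝ)..T, X s * I s) = I T ^ 2 / 2 := by
    intro T
    rw [intervalIntegral.integral_eq_sub_of_hasDerivAt (f := fun t => I t ^ 2 / 2)
      (f' := fun t => X t * I t)
      (fun t _ => ?_) (Continuous.intervalIntegrable (by fun_prop) _ _)]
    · simp [hI0]
    · refine (((hId t).pow 2).div_const 2).congr_deriv ?_
      push_cast; ring
  have hsX : ∀ T, (∫ s in (0:ℝ)..T, (X s * s + I s)) = T * I T := by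
    intro T
    rw [intervalIntegral.integral_eq_sub_of_hasDerivAt (f := fun t => t * I t)
      (fun t _ => ?_) (Continuous.intervalIntegrable (by fun_prop) _ _)]
    · simp
    · refine ((hasDerivAt_id t).mul (hId t)).congr_deriv ?_
      simp only [id]; ring
  have hQe : ∀ T, Q T = θ * (I T ^ 2 / 2) + (∫ s in (0:ℝ)..T, X s * (H s - α * s))
      + α * (T * I T) - α * ∫ s in (0:ℝ)..T, I s := by
    intro T
    rw [← hXI, ← hsX, hQ, ← intervalIntegral.integral_const_mul,
      ← intervalIntegral.integral_const_mul, ← intervalIntegral.integral_const_mul,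
      ← intervalIntegral.integral_add, ← intervalIntegral.integral_add,
      ← intervalIntegral.integral_sub]
    · congr 1; ext s; rw [hH]; ring
    all_goals exact Continuous.intervalIntegrable (by fun_prop) _ _
  have lR : Tendsto (fun T => (θ * Q T - X T ^ 2 / 2) / (T * Real.exp (θ * T))) atTop (nhds 0) := by
    have := (((lXG.const_mul θ).sub ((lj.mul lT).const_mul (θ * α))).sub
      ((li.mul lG).const_mul θ)).sub (((hHlim.pow 2).mul lE).div_const 2)
    simp only [mul_zero, zero_div, sub_zero] at this
    refine this.congr' ?_
    filter_upwards [eventually_gt_atTop 0] with T hT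
    rw [hQe, show X T = H T + θ * I T by rw [hH]; ring]
    field_simp
    ring
  have lN := (hHlim.mul lq).add (li.mul lR)
  have lD := lq.sub ((li.pow 2).mul lT)
  have hne : c ^ 2 / (2 * θ) ≠ 0 := by positivity
  rw [mul_zero, add_zero] at lN
  rw [mul_zero, sub_zero] at lD
  have := lN.div lD hne
  rw [mul_div_cancel_right₀ _ hne] at this
  refine this.congr' ?_
  filter_upwards [eventually_gt_atTop 0] with T hT
  simp only [Pi.div_apply]
  have he := Real.exp_pos (θ * T)
  rw [← mul_div_mul_right (X T * Q T - (1 / 2) * X T ^ 2 * I T) (T * Q T - I T ^ 2)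
    (c := 1 / (T * Real.exp (θ * T) ^ 2)) (by positivity)]
  congr 1
  · rw [hH]; field_simp; ring
  · field_simp

theorem vasicek_alpha_consistency (θ μ : ℝ) (hθ : 0 < θ)
    (ζ : ℝ → ℝ) (ζinf : ℝ)
    (hζcont : ContinuousOn ζ (Set.Ici 0)) (hζ0 : ζ 0 = 0)
    (hζlim : Filter.Tendsto ζ Filter.atTop (nhds ζinf))
    (hne : μ + ζinf ≠ 0)
    (X : ℝ → ℝ)
    (hX : ∀ t, 0 ≤ t → X t = μ * (Real.exp (θ * t) - 1) + Real.exp (θ * t) * ζ t)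
    (G : ℝ → ℝ)
    (hG : ∀ t, G t = X t - μ * θ * t - θ * ∫ s in (0:ℝ)..t, X s)
    (hGrowth : ∃ δ ∈ Set.Ioo (0:ℝ) 1,
      Filter.Tendsto (fun T : ℝ => G T / T ^ δ) Filter.atTop (nhds 0)) :
    Filter.Tendsto
      (fun T : ℝ =>
        (X T * (∫ s in (0:ℝ)..T, (X s) ^ 2)
            - (1 / 2) * (X T) ^ 2 * ∫ s in (0:ℝ)..T, X s) /
          (T * (∫ s in (0:ℝ)..T, (X s) ^ 2) - (∫ s in (0:ℝ)..T, X s) ^ 2))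
      Filter.atTop (nhds (μ * θ)) := by
  obtain ⟨δ, ⟨hδ0, hδ1⟩, hδ⟩ := hGrowth
  have hXc : ContinuousOn X (Set.Ici 0) := by
    have : ContinuousOn (fun t => μ * (Real.exp (θ * t) - 1) + Real.exp (θ * t) * ζ t)
      (Set.Ici 0) := by fun_prop
    exact this.congr fun t ht => hX t ht
  set Y : ℝ → ℝ := fun t => X (max t 0) with hY
  have hYc : Continuous Y := hXc.comp_continuous (by fun_prop) (fun t => Set.mem_Ici.2 (le_max_right _ _))
  have hYX : ∀ t, 0 ≤ t → Y t = X t := fun t ht => by simp [hY, ht]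
  have hYI : ∀ T, 0 ≤ T → (∫ s in (0:ℝ)..T, Y s) = ∫ s in (0:ℝ)..T, X s := fun T hT =>
    intervalIntegral.integral_congr fun s hs => hYX s (by
      rw [Set.uIcc_of_le hT] at hs; exact hs.1)
  have hYQ : ∀ T, 0 ≤ T → (∫ s in (0:ℝ)..T, Y s ^ 2) = ∫ s in (0:ℝ)..T, X s ^ 2 := fun T hT =>
    intervalIntegral.integral_congr fun s hs => by
      rw [Set.uIcc_of_le hT] at hs
      simp only [hYX s hs.1]
  have lE : Tendsto (fun T => 1 / Real.exp (θ * T)) atTop (nhds 0) :=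
    tendsto_const_nhds.div_atTop
      (Real.tendsto_exp_atTop.comp (tendsto_id.const_mul_atTop hθ))
  have key := aux_core θ (μ * θ) (μ + ζinf) hθ hne Y (fun T => ∫ s in (0:ℝ)..T, Y s)
    (fun T => ∫ s in (0:ℝ)..T, Y s ^ 2) (fun T => Y T - θ * ∫ s in (0:ℝ)..T, Y s) hYc
    (fun _ => rfl) (fun _ => rfl) (fun _ => rfl) (by
      have := (hζlim.const_add μ).sub (lE.const_mul μ)
      rw [mul_zero, sub_zero] at this
      refine this.congr' ?_
      filter_upwards [eventually_ge_atTop 0] with t ht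
      rw [hYX t ht, hX t ht]
      field_simp
      ring) (by
      have h1 := (hδ.mul (tendsto_rpow_neg_atTop (y := 1 - δ) (by linarith))).const_add (μ * θ)
      rw [mul_zero, add_zero] at h1
      refine h1.congr' ?_
      filter_upwards [eventually_gt_atTop 0] with t ht
      rw [hYX t ht.le, hYI t ht.le, neg_sub, Real.rpow_sub ht, Real.rpow_one, hG]
      have : t ^ δ ≠ 0 := (Real.rpow_pos_of_pos ht δ).ne'
      field_simp
      ring)
  refine key.congr' ?_
  filter_upwards [eventually_ge_atTop 0] with T hT
  rw [hYX T hT, hYI T hT, hYQ T hT]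
end
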